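/- (Embedding theorem, interpolating vector field part) Let ε = sup_{(P,q)∈D} max(|∂_P S(P,q)|, |∂_q S(P,q)|). If m = ⌊δ/(6eε) − d⌋ ≥ 1, then: every point of D₁ has at least m well-defined forward iterates under f lying in D; the interpolating vector field X_m(x) = Σ_{k=1}^m ((−1)^{k−1}/k) Δ_k(x) is analytic on D₁ with ‖X_m‖_{D₁} ≤ 2ε; and its time-one flow map Φ_{X_m} satisfies ‖Φ_{X_m} − f‖_{D₀} ≤ 3 e^{d+1} ε · exp(−δ/(6eε)). -/

import Mathlib

/-- Complex phase space `ℂ^d × ℂ^d ≅ ℂ^{2d}` with the sup norm. -/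
abbrev CPhase (d : ℕ) := (Fin d → ℂ) × (Fin d → ℂ)

/-- Partial gradient `∂_P S` of `S` in the first block of `d` variables. -/
noncomputable def pGrad (d : ℕ) (S : CPhase d → ℂ) (x : CPhase d) : Fin d → ℂ :=
  fun i => fderiv ℂ S x (Pi.single i 1, 0)

/-- Partial gradient `∂_q S` of `S` in the second block of `d` variables. -/
noncomputable def qGrad (d : ℕ) (S : CPhase d → ℂ) (x : CPhase d) : Fin d → ℂ :=
  fun i => fderiv ℂ S x (0, Pi.single i 1)

/-- Newton finite differences of a map `f`: `Δ₀(x) = x`,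
`Δ_k(x) = Δ_{k−1}(f(x)) − Δ_{k−1}(x)`. -/
def finDiff {α : Type*} [AddCommGroup α] (f : α → α) : ℕ → α → α
  | 0, x => x
  | k + 1, x => finDiff f k (f x) - finDiff f k x

/-- The interpolating vector field of order `m`:
`X_m(x) = Σ_{k=1}^m ((−1)^{k−1}/k) Δ_k(x)`. -/
noncomputable def interpVF (d : ℕ) (f : CPhase d → CPhase d) (m : ℕ) (x : CPhase d) :
    CPhase d :=
  ∑ k ∈ Finset.Icc 1 m, ((-1 : ℂ) ^ (k - 1) / k) • finDiff f k x


open Set Filter Topology Metric Asymptotics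

set_option linter.unusedSectionVars false

namespace IVF

section general
variable {V : Type*} [NormedAddCommGroup V] [NormedSpace ℂ V]

/-- The linear homotopy from the identity to `f`. -/
def homF (f : V → V) (μ : ℂ) (y : V) : V := y + μ • (f y - y)

lemma homF_one (f : V → V) : homF f 1 = f := by
  funext y; simp [homF]

lemma ball_homF {f : V → V} {U : Set V} {ε : ℝ} (hU : ∀ y ∈ U, ‖f y - y‖ ≤ ε) {y : V} {r : ℝ}
    {μ : ℂ} (hb : ball y r ⊆ U) (hr : 0 < r) : ball (homF f μ y) (r - ‖μ‖ * ε) ⊆ U := by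
  refine Subset.trans ?_ hb
  apply ball_subset_ball'
  have h1 : dist (homF f μ y) y ≤ ‖μ‖ * ε := by
    rw [dist_eq_norm]
    simp only [homF, add_sub_cancel_left, norm_smul]
    exact mul_le_mul_of_nonneg_left (hU y (hb (mem_ball_self hr))) (norm_nonneg _)
  linarith

lemma finDiff_analyticAt {f : V → V} {U : Set V} {ε : ℝ} (hε : 0 < ε)
    (hU : ∀ y ∈ U, ‖f y - y‖ ≤ ε) (hfa : AnalyticOnNhd ℂ f U) (k : ℕ) :
    ∀ (y : V) (r : ℝ) (μ : ℂ), ball y r ⊆ U → 0 < r → k * ‖μ‖ * ε < r →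
      AnalyticAt ℂ (fun p : ℂ × V => finDiff (homF f p.1) k p.2) (μ, y) := by
  induction k with
  | zero =>
    intro y r μ _ _ _
    simp only [finDiff]
    exact analyticAt_snd
  | succ k ih =>
    intro y r μ hb hr hk
    push_cast at hk
    have h0 : 0 ≤ ‖μ‖ * ε := by positivity
    have h1 : 0 ≤ (k : ℝ) * (‖μ‖ * ε) := by positivity
    simp only [finDiff]
    apply AnalyticAt.sub
    · have hF : AnalyticAt ℂ (fun p : ℂ × V => (p.1, homF f p.1 p.2)) (μ, y) := by
        apply AnalyticAt.prod analyticAt_fst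
        unfold homF
        have hfy : AnalyticAt ℂ (fun p : ℂ × V => f p.2) (μ, y) :=
          AnalyticAt.fun_comp (g := f) (f := fun p : ℂ × V => p.2)
            (hfa y (hb (mem_ball_self hr))) analyticAt_snd
        exact analyticAt_snd.add (analyticAt_fst.smul (hfy.sub analyticAt_snd))
      have := ih (homF f μ y) (r - ‖μ‖ * ε) μ (ball_homF hU hb hr) (by nlinarith) (by nlinarith)
      exact AnalyticAt.fun_comp (f := fun p : ℂ × V => (p.1, homF f p.1 p.2)) this hF
    · exact ih y r μ hb hr (by nlinarith)

lemma finDiff_bound {f : V → V} {U : Set V} {ε : ℝ} (hε : 0 < ε)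
    (hU : ∀ y ∈ U, ‖f y - y‖ ≤ ε) (μ : ℂ) (k : ℕ) :
    ∀ (y : V) (r : ℝ), ball y r ⊆ U → 0 < r → k * ‖μ‖ * ε < r →
      ‖finDiff (homF f μ) (k + 1) y‖ ≤ 2 ^ k * (‖μ‖ * ε) := by
  induction k with
  | zero =>
    intro y r hb hr _
    simp only [finDiff, homF, add_sub_cancel_left, norm_smul, pow_zero, one_mul]
    exact mul_le_mul_of_nonneg_left (hU y (hb (mem_ball_self hr))) (norm_nonneg _)
  | succ k ih =>
    intro y r hb hr hk
    push_cast at hk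
    have h0 : 0 ≤ ‖μ‖ * ε := by positivity
    have h1 : 0 ≤ (k : ℝ) * (‖μ‖ * ε) := by positivity
    rw [finDiff]
    have a1 := ih (homF f μ y) (r - ‖μ‖ * ε) (ball_homF hU hb hr) (by nlinarith) (by nlinarith)
    have a2 := ih y r hb hr (by nlinarith)
    calc _ ≤ _ := norm_sub_le _ _
      _ ≤ _ := add_le_add a1 a2
      _ = _ := by ring

lemma iterate_mem {f : V → V} {U : Set V} {ε : ℝ} (hε : 0 < ε)
    (hU : ∀ y ∈ U, ‖f y - y‖ ≤ ε) (y : V) (r : ℝ) (hb : ball y r ⊆ U) (k : ℕ) (hk : k * ε < r) :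
    dist (f^[k] y) y ≤ k * ε := by
  induction k with
  | zero => simp
  | succ k ih =>
    push_cast at hk ⊢
    have h := ih (by nlinarith)
    rw [Function.iterate_succ_apply']
    have h2 := hU (f^[k] y) (hb (by rw [mem_ball]; nlinarith))
    calc _ ≤ dist (f (f^[k] y)) (f^[k] y) + dist (f^[k] y) y := dist_triangle _ _ _
      _ ≤ _ := by rw [dist_eq_norm (f _)]; linarith

lemma finDiff_isBigO {f : V → V} {U : Set V} {ε : ℝ} (hε : 0 < ε) (hUo : IsOpen U)
    (hU : ∀ y ∈ U, ‖f y - y‖ ≤ ε) (hfa : AnalyticOnNhd ℂ f U) [CompleteSpace V] (k : ℕ) :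
    ∀ y ∈ U, (fun p : ℂ × V => finDiff (homF f p.1) k p.2) =O[𝓝 ((0 : ℂ), y)]
      fun p => p.1 ^ k := by
  induction k with
  | zero =>
    intro y hy
    simp only [finDiff, pow_zero]
    exact (continuousAt_snd (p := ((0 : ℂ), y))).isBigO_one ℂ
  | succ k ih =>
    intro y hy
    obtain ⟨r, hr, hb⟩ := Metric.isOpen_iff.1 hUo y hy
    have han := finDiff_analyticAt hε hU hfa k y r 0 hb hr (by simpa using hr)
    obtain ⟨C, hC⟩ := (ih y hy).bound
    obtain ⟨η, hη, hball⟩ := Metric.eventually_nhds_iff_ball.1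
      (hC.and (han.eventually_analyticAt.and
        (continuousAt_snd.eventually (hUo.mem_nhds hy) :
          ∀ᶠ p : ℂ × V in 𝓝 ((0 : ℂ), y), p.2 ∈ U)))
    have hmem : ∀ (μ : ℂ) (z : V), ‖μ‖ < η → dist z y < η → (μ, z) ∈ ball ((0 : ℂ), y) η := by
      intro μ z h1 h2
      rw [mem_ball, Prod.dist_eq]
      simp only [dist_zero_right, sup_lt_iff]
      exact ⟨h1, h2⟩
    have hη' : 0 < min (η / 2) (η / 2 / ε) := by positivity
    apply IsBigO.of_bound (2 * C / (η / 2) * ε)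
    filter_upwards [ball_mem_nhds ((0 : ℂ), y) hη'] with p hp
    obtain ⟨μ, z⟩ := p
    rw [mem_ball, Prod.dist_eq] at hp
    simp only [dist_zero_right, sup_lt_iff, lt_min_iff] at hp
    obtain ⟨⟨hμ1, hz1⟩, hμ2, -⟩ := hp
    have hin : ∀ w ∈ ball z (η / 2), (μ, w) ∈ ball ((0 : ℂ), y) η := by
      intro w hw
      apply hmem _ _ (by linarith)
      calc dist w y ≤ dist w z + dist z y := dist_triangle _ _ _
        _ < η := by rw [mem_ball] at hw; linarith
    have hzU : z ∈ U := (hball _ (hin z (mem_ball_self (by linarith)))).2.2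
    have hdF : dist (homF f μ z) z ≤ ‖μ‖ * ε := by
      rw [dist_eq_norm]
      simp only [homF, add_sub_cancel_left, norm_smul]
      exact mul_le_mul_of_nonneg_left (hU z hzU) (norm_nonneg _)
    have hFz : homF f μ z ∈ ball z (η / 2) := by
      rw [mem_ball]
      rw [lt_div_iff₀ hε] at hμ2
      linarith
    have hdiff : DifferentiableOn ℂ (fun w => finDiff (homF f μ) k w) (ball z (η / 2)) := by
      intro w hw
      have h1 := (hball _ (hin w hw)).2.1.differentiableAt
      exact (DifferentiableAt.comp w (f := fun w : V => (μ, w)) h1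
        ((differentiableAt_const μ).prodMk differentiableAt_id)).differentiableWithinAt
    have hle : ∀ w ∈ ball z (η / 2), ‖finDiff (homF f μ) k w‖ ≤ C * ‖μ‖ ^ k := by
      intro w hw
      simpa using (hball _ (hin w hw)).1
    have hmaps : MapsTo (fun w => finDiff (homF f μ) k w) (ball z (η / 2))
        (closedBall (finDiff (homF f μ) k z) (2 * (C * ‖μ‖ ^ k))) := by
      intro w hw
      rw [mem_closedBall, dist_eq_norm]
      have h1 := hle w hw
      have h2 := hle z (mem_ball_self (by linarith))
      exact (norm_sub_le _ _).trans (by linarith)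
    have key := Complex.dist_le_div_mul_dist_of_mapsTo_ball hdiff hmaps hFz
    have hC0 : 0 ≤ C * ‖μ‖ ^ k := (norm_nonneg _).trans (hle z (mem_ball_self (by linarith)))
    simp only [finDiff]
    rw [← dist_eq_norm]
    refine key.trans ((mul_le_mul_of_nonneg_left hdF (by positivity)).trans (le_of_eq ?_))
    rw [norm_pow]
    ring

lemma schwarz_n {h : ℂ → V} {R M : ℝ} {n : ℕ} (hd : DifferentiableOn ℂ h (ball 0 R))
    (hb : ∀ z ∈ ball (0 : ℂ) R, ‖h z‖ ≤ M) (ho : h =O[𝓝 0] fun z => z ^ (n + 1))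
    {z : ℂ} (hz : z ∈ ball (0 : ℂ) R) : ‖h z‖ ≤ M * (‖z‖ / R) ^ (n + 1) := by
  have h0 : h 0 = 0 := by
    obtain ⟨C, hC⟩ := ho.bound
    simpa using hC.self_of_nhds
  have := Complex.dist_le_mul_div_pow_of_mapsTo_ball_of_isLittleO (n := n) hd (R₂ := M)
    (fun w hw => by rw [h0]; simpa using hb w hw) (by
      simp only [h0, sub_zero]
      refine ho.trans_isLittleO ?_
      refine IsLittleO.of_norm_left ?_
      simp only [norm_pow]
      exact (isLittleO_pow_pow (𝕜 := ℝ) (Nat.lt_succ_self n)).comp_tendsto tendsto_norm_zero) hz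
  simpa [h0] using this

lemma slice {g : ℂ × V → V} {μ : ℂ} {y : V} (h : AnalyticAt ℂ g (μ, y)) :
    AnalyticAt ℂ (fun μ => g (μ, y)) μ :=
  AnalyticAt.fun_comp (f := fun μ : ℂ => (μ, y)) h (analyticAt_id.prod analyticAt_const)

lemma slice_bigO {g : ℂ × V → V} {y : V} {k : ℕ} (h : g =O[𝓝 ((0 : ℂ), y)] fun p => p.1 ^ k) :
    (fun μ => g (μ, y)) =O[𝓝 0] fun μ => μ ^ k :=
  h.comp_tendsto (k := fun μ : ℂ => (μ, y))
    ((continuous_id.prodMk continuous_const).tendsto' _ _ rfl)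

lemma finDiff_schwarz {f : V → V} {U : Set V} {ε : ℝ} (hε : 0 < ε) (hUo : IsOpen U)
    (hU : ∀ y ∈ U, ‖f y - y‖ ≤ ε) (hfa : AnalyticOnNhd ℂ f U) [CompleteSpace V] (k : ℕ)
    (y : V) (r R : ℝ) (hb : ball y r ⊆ U) (hr : 0 < r) (hR : 0 < R) (hk : (k + 1) * R * ε ≤ r)
    (μ : ℂ) (hμ : ‖μ‖ < R) :
    ‖finDiff (homF f μ) (k + 1) y‖ ≤ ‖μ‖ * ε * (2 * ‖μ‖ / R) ^ k := by
  have hyU := hb (mem_ball_self hr)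
  have hs : ∀ ν : ℂ, ‖ν‖ < R → ((k + 1 : ℕ) : ℝ) * ‖ν‖ * ε < r := by
    intro ν hν
    refine lt_of_lt_of_le ?_ hk
    push_cast
    gcongr
  have := schwarz_n (h := fun μ => finDiff (homF f μ) (k + 1) y) (R := R) (M := 2 ^ k * (R * ε))
    (n := k) (fun ν hν => by
      have := finDiff_analyticAt hε hU hfa (k + 1) y r ν hb hr (hs ν (by simpa using hν))
      exact (slice this).differentiableAt.differentiableWithinAt)
    (fun ν hν => by
      have hν' : ‖ν‖ < R := by simpa using hν
      have h1 := hs ν hν'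
      push_cast at h1
      have h2 : 0 ≤ ‖ν‖ * ε := by positivity
      refine (finDiff_bound hε hU ν k y r hb hr (by nlinarith)).trans ?_
      gcongr)
    (slice_bigO (finDiff_isBigO hε hUo hU hfa (k + 1) y hyU)) (z := μ) (by simpa using hμ)
  refine this.trans (le_of_eq ?_)
  rw [div_pow, div_pow, mul_pow]
  field_simp
  ring

lemma half_sum (n : ℕ) : ∑ k ∈ Finset.range (n + 1), (1 / ((k : ℝ) + 1)) * (1 / 2) ^ k
    ≤ 3 / 2 - 1 / 2 * (1 / 2) ^ n := by
  induction n with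
  | zero => norm_num
  | succ n ih =>
    rw [Finset.sum_range_succ]
    have h1 : (1 : ℝ) / (((n + 1 : ℕ) : ℝ) + 1) ≤ 1 / 2 := by
      apply one_div_le_one_div_of_le (by norm_num)
      push_cast
      have : (0 : ℝ) ≤ n := Nat.cast_nonneg n
      linarith
    have h2 : (0 : ℝ) ≤ (1 / 2) ^ (n + 1) := by positivity
    have h3 := mul_le_mul_of_nonneg_right h1 h2
    have h4 : (1 / 2 : ℝ) ^ (n + 1) = 1 / 2 * (1 / 2) ^ n := by ring
    linarith

lemma sum_Icc_eq (m : ℕ) (g : ℕ → V) :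
    ∑ k ∈ Finset.Icc 1 m, g k = ∑ k ∈ Finset.range m, g (k + 1) := by
  rw [Finset.range_eq_Ico, Finset.sum_Ico_add' g 0 m 1]
  rfl

lemma sum_bound (m : ℕ) (w : ℕ → ℂ) (v : ℕ → V) (A : ℝ) (hA : 0 ≤ A)
    (hw : ∀ k, ‖w (k + 1)‖ ≤ 1 / ((k : ℝ) + 1))
    (hv : ∀ k < m, ‖v (k + 1)‖ ≤ A * (1 / 2) ^ k) :
    ‖∑ k ∈ Finset.range m, w (k + 1) • v (k + 1)‖ ≤ 3 / 2 * A := by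
  calc _ ≤ ∑ k ∈ Finset.range m, A * ((1 / ((k : ℝ) + 1)) * (1 / 2) ^ k) := by
        apply norm_sum_le_of_le
        intro k hk
        rw [norm_smul]
        calc _ ≤ 1 / ((k : ℝ) + 1) * (A * (1 / 2) ^ k) :=
              mul_le_mul (hw k) (hv k (Finset.mem_range.1 hk)) (norm_nonneg _) (by positivity)
          _ = _ := by ring
    _ = A * ∑ k ∈ Finset.range m, (1 / ((k : ℝ) + 1)) * (1 / 2) ^ k := by rw [Finset.mul_sum]
    _ ≤ A * (3 / 2) := by
        apply mul_le_mul_of_nonneg_left _ hA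
        cases m with
        | zero => norm_num
        | succ n =>
          have := half_sum n
          have h2 : (0 : ℝ) ≤ (1 / 2) ^ n := by positivity
          linarith
    _ = _ := by ring

end general
end IVF
namespace IVF

section order
variable {V : Type*} [NormedAddCommGroup V] [NormedSpace ℂ V]

lemma eq_zero_of_smul_bigO {v : V} {N : ℕ}
    (h : (fun μ : ℂ => μ ^ N • v) =O[𝓝 0] fun μ => μ ^ (N + 1)) : v = 0 := by
  obtain ⟨C, hC⟩ := h.bound
  have h1 : ∀ᶠ μ : ℂ in 𝓝[≠] 0, ‖v‖ ≤ C * ‖μ‖ := by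
    filter_upwards [hC.filter_mono nhdsWithin_le_nhds, self_mem_nhdsWithin] with μ hμ hne
    have hp : 0 < ‖μ‖ ^ N := pow_pos (norm_pos_iff.2 hne) N
    rw [norm_smul, norm_pow, norm_pow, pow_succ] at hμ
    have : ‖μ‖ ^ N * ‖v‖ ≤ ‖μ‖ ^ N * (C * ‖μ‖) := by linarith
    exact le_of_mul_le_mul_left this hp
  have h2 : Tendsto (fun μ : ℂ => C * ‖μ‖) (𝓝[≠] 0) (𝓝 0) := by
    have : Tendsto (fun μ : ℂ => C * ‖μ‖) (𝓝 0) (𝓝 0) := by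
      have hc : Continuous fun μ : ℂ => C * ‖μ‖ := by fun_prop
      exact hc.tendsto' _ _ (by simp)
    exact this.mono_left nhdsWithin_le_nhds
  have h3 := ge_of_tendsto h2 h1
  exact norm_le_zero_iff.1 h3

lemma pow_bigO_pow {a b : ℕ} (h : a ≤ b) :
    (fun μ : ℂ => μ ^ b) =O[𝓝 0] fun μ : ℂ => μ ^ a := by
  apply IsBigO.of_bound 1
  filter_upwards [ball_mem_nhds (0 : ℂ) one_pos] with μ hμ
  have : ‖μ‖ < 1 := by simpa using hμ
  rw [norm_pow, norm_pow, one_mul]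
  exact pow_le_pow_of_le_one (norm_nonneg _) this.le h

lemma poly_coeff_zero (v : ℕ → V) (N : ℕ) :
    ((fun μ : ℂ => ∑ n ∈ Finset.range N, μ ^ n • v n) =O[𝓝 0] fun μ => μ ^ N) →
    ∀ n < N, v n = 0 := by
  induction N with
  | zero => intro _ n hn; omega
  | succ N ih =>
    intro h
    simp only [Finset.sum_range_succ] at h
    have hN : (fun μ : ℂ => μ ^ N • v N) =O[𝓝 0] fun μ => μ ^ N := by
      apply IsBigO.of_bound ‖v N‖
      filter_upwards with μ
      rw [norm_smul, mul_comm]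
    have h1 := (h.trans (pow_bigO_pow (Nat.le_succ N))).sub hN
    simp only [add_sub_cancel_right] at h1
    have h2 := ih h1
    have h3 : ∀ μ : ℂ, ∑ n ∈ Finset.range N, μ ^ n • v n = 0 := fun μ =>
      Finset.sum_eq_zero fun n hn => by rw [h2 n (Finset.mem_range.1 hn), smul_zero]
    simp only [h3, zero_add] at h
    have h4 := eq_zero_of_smul_bigO h
    intro n hn
    rcases Nat.lt_succ_iff_lt_or_eq.1 hn with h | h
    · exact h2 n h
    · rw [h, h4]

/-- A homogeneous polynomial of degree `n ≤ m` in two variables that vanishes at `(j, 1)`,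
`j = 0, …, m`, vanishes at every `(t, 1)`. -/
lemma multilin_zero {n m : ℕ} (hnm : n ≤ m) (p : ContinuousMultilinearMap ℂ (fun _ : Fin n => ℂ × ℂ) V)
    (hz : ∀ j ≤ m, p (fun _ => ((j : ℂ), 1)) = 0) (t : ℂ) : p (fun _ => (t, 1)) = 0 := by
  classical
  have hexp : ∀ t : ℂ, p (fun _ => (t, 1)) = ∑ s : Finset (Fin n),
      t ^ s.card • p (s.piecewise (fun _ => ((1 : ℂ), (0 : ℂ))) (fun _ => ((0 : ℂ), (1 : ℂ)))) := by
    intro t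
    have h1 : (fun _ : Fin n => ((t, 1) : ℂ × ℂ)) =
        (fun _ => ((t : ℂ), (0 : ℂ))) + (fun _ => ((0 : ℂ), (1 : ℂ))) := by
      funext i; simp
    rw [h1]
    have h2 := p.toMultilinearMap.map_add_univ (fun _ => ((t : ℂ), (0 : ℂ)))
      (fun _ => ((0 : ℂ), (1 : ℂ)))
    refine h2.trans (Finset.sum_congr rfl fun s _ => ?_)
    have h3 := p.toMultilinearMap.map_piecewise_smul (fun _ => t)
      (s.piecewise (fun _ => ((1 : ℂ), (0 : ℂ))) (fun _ => ((0 : ℂ), (1 : ℂ)))) s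
    rw [Finset.prod_const] at h3
    refine Eq.trans ?_ h3
    congr 1
    funext i
    by_cases hi : i ∈ s <;> simp [Finset.piecewise, hi]
  by_contra hne
  obtain ⟨φ, hφ⟩ := SeparatingDual.exists_ne_zero (R := ℂ) hne
  let q : Polynomial ℂ := ∑ s : Finset (Fin n),
    Polynomial.C (φ (p (s.piecewise (fun _ => ((1 : ℂ), (0 : ℂ)))
      (fun _ => ((0 : ℂ), (1 : ℂ)))))) * Polynomial.X ^ s.card
  have hq : ∀ t : ℂ, q.eval t = φ (p (fun _ => (t, 1))) := by
    intro t
    rw [hexp t, map_sum, Polynomial.eval_finsetSum]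
    refine Finset.sum_congr rfl fun s _ => ?_
    rw [map_smul, smul_eq_mul, Polynomial.eval_mul, Polynomial.eval_C, Polynomial.eval_pow,
      Polynomial.eval_X, mul_comm]
  have hdeg : q.natDegree ≤ n := by
    apply Polynomial.natDegree_sum_le_of_forall_le
    intro s _
    refine (Polynomial.natDegree_C_mul_X_pow_le _ _).trans ?_
    simpa using Finset.card_le_univ s
  have hq0 : q = 0 := by
    apply Polynomial.eq_zero_of_natDegree_lt_card_of_eval_eq_zero q
      (f := fun j : Fin (m + 1) => ((j : ℕ) : ℂ))
    · intro a b hab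
      simp only [Nat.cast_inj] at hab
      exact Fin.ext hab
    · intro j
      rw [hq, hz j (Nat.lt_succ_iff.1 j.2), map_zero]
    · simp; omega
  apply hφ
  rw [← hq, hq0, Polynomial.eval_zero]

lemma homogeneous_order {G : ℂ × ℂ → V} (hG : AnalyticAt ℂ G (0, 0)) (m : ℕ)
    (hj : ∀ j ≤ m, (fun μ : ℂ => G (j * μ, μ)) =O[𝓝 0] fun μ => μ ^ (m + 1)) (t : ℂ) :
    (fun μ : ℂ => G (t * μ, μ)) =O[𝓝 0] fun μ => μ ^ (m + 1) := by
  obtain ⟨p, hp⟩ := hG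
  have h0 := hp.isBigO_sub_partialSum_pow (m + 1)
  have h1 : ∀ t : ℂ, (fun μ : ℂ => G (t * μ, μ) -
      ∑ n ∈ Finset.range (m + 1), μ ^ n • p n (fun _ => (t, 1))) =O[𝓝 0]
      fun μ => μ ^ (m + 1) := by
    intro t
    have hc : Tendsto (fun μ : ℂ => (t * μ, μ)) (𝓝 0) (𝓝 ((0 : ℂ), (0 : ℂ))) := by
      have : Continuous fun μ : ℂ => (t * μ, μ) := by fun_prop
      exact this.tendsto' _ _ (by simp)
    have h2 := h0.comp_tendsto hc
    have h3 : (fun μ : ℂ => ‖((t * μ, μ) : ℂ × ℂ)‖ ^ (m + 1)) =O[𝓝 0]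
        fun μ : ℂ => μ ^ (m + 1) := by
      apply IsBigO.pow
      apply IsBigO.of_bound (max ‖t‖ 1)
      filter_upwards with μ
      rw [norm_norm, Prod.norm_def, max_mul_of_nonneg _ _ (norm_nonneg μ)]
      simp
    refine (h2.trans h3).congr_left fun μ => ?_
    simp only [Function.comp, FormalMultilinearSeries.partialSum, Prod.mk_add_mk, zero_add]
    congr 1
    refine Finset.sum_congr rfl fun n _ => ?_
    have h4 := (p n).toMultilinearMap.map_smul_univ (fun _ => μ) (fun _ => ((t, 1) : ℂ × ℂ))
    simp only [Finset.prod_const, Finset.card_univ, Fintype.card_fin] at h4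
    refine Eq.trans ?_ h4
    have h5 : (fun _ : Fin n => ((t * μ, μ) : ℂ × ℂ)) = fun _ => μ • ((t, 1) : ℂ × ℂ) := by
      funext i
      simp [mul_comm]
    rw [h5]
    rfl
  have h2 : ∀ n < m + 1, ∀ j ≤ m, p n (fun _ => ((j : ℂ), 1)) = 0 := by
    intro n hn j hjm
    refine poly_coeff_zero (fun n => p n (fun _ => ((j : ℂ), 1))) (m + 1) ?_ n hn
    refine ((hj j hjm).sub (h1 j)).congr_left fun μ => ?_
    simp
  refine (h1 t).congr_left fun μ => ?_
  rw [Finset.sum_eq_zero, sub_zero]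
  intro n hn
  have hn' := Finset.mem_range.1 hn
  rw [multilin_zero (Nat.lt_succ_iff.1 hn') (p n) (h2 n hn') t, smul_zero]

lemma exists_factor {h : ℂ → V} (ha : AnalyticAt ℂ h 0) (k : ℕ)
    (ho : h =O[𝓝 0] fun z => z ^ k) :
    ∃ a : ℂ → V, AnalyticAt ℂ a 0 ∧ ∀ᶠ z in 𝓝 0, h z = z ^ k • a z := by
  have hle : (k : ℕ∞) ≤ analyticOrderAt h 0 := by
    by_contra hlt
    push Not at hlt
    obtain ⟨j, hj⟩ := ENat.ne_top_iff_exists.1 (ne_top_of_lt hlt)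
    rw [← hj] at hlt
    have hjk : j < k := by exact_mod_cast hlt
    obtain ⟨g, hg, hg0, hev⟩ := (ha.analyticOrderAt_eq_natCast).1 hj.symm
    apply hg0
    have h1 : (fun z : ℂ => z ^ j • g z) =O[𝓝 0] fun z => z ^ (j + 1) := by
      refine (IsBigO.congr' ho ?_ EventuallyEq.rfl).trans (pow_bigO_pow hjk)
      filter_upwards [hev] with z hz
      rw [hz, sub_zero]
    have h2 : (fun z : ℂ => z ^ j • (g z - g 0)) =O[𝓝 0] fun z => z ^ (j + 1) := by
      have h3 := hg.differentiableAt.isBigO_sub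
      have h4 := (isBigO_refl (fun z : ℂ => z ^ j) (𝓝 0)).smul h3
      refine h4.congr_right fun z => ?_
      simp [pow_succ]
    apply eq_zero_of_smul_bigO (N := j)
    refine (h1.sub h2).congr_left fun z => ?_
    rw [← smul_sub, sub_sub_cancel]
  obtain ⟨a, h1, h2⟩ := (natCast_le_analyticOrderAt ha).1 hle
  exact ⟨a, h1, by simpa using h2⟩

end order
end IVF
namespace IVF

/-- Generalized binomial coefficient `C(t,k)`. -/
noncomputable def bc : ℕ → ℂ → ℂ
  | 0, _ => 1
  | k + 1, t => bc k t * (t - k) / (k + 1)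

/-- Its derivative in `t`. -/
noncomputable def cc : ℕ → ℂ → ℂ
  | 0, _ => 0
  | k + 1, t => (cc k t * (t - k) + bc k t) / (k + 1)

/-- Homogenized version of `bc`. -/
noncomputable def bh : ℕ → ℂ → ℂ → ℂ
  | 0, _, _ => 1
  | k + 1, s, μ => bh k s μ * (s - k * μ) / (k + 1)

/-- Homogenized version of `cc`. -/
noncomputable def ch : ℕ → ℂ → ℂ → ℂ
  | 0, _, _ => 0
  | k + 1, s, μ => (ch k s μ * (s - k * μ) + μ * bh k s μ) / (k + 1)

lemma bh_eq (k : ℕ) (t μ : ℂ) : bh k (t * μ) μ = μ ^ k * bc k t := by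
  induction k with
  | zero => simp [bh, bc]
  | succ k ih => rw [bh, bc, ih]; ring

lemma ch_eq (k : ℕ) (t μ : ℂ) : ch k (t * μ) μ = μ ^ k * cc k t := by
  induction k with
  | zero => simp [ch, cc]
  | succ k ih => rw [ch, cc, ih, bh_eq]; ring

lemma bh_analytic (k : ℕ) (q : ℂ × ℂ) : AnalyticAt ℂ (fun p : ℂ × ℂ => bh k p.1 p.2) q := by
  induction k with
  | zero => simp only [bh]; exact analyticAt_const
  | succ k ih =>
    simp only [bh, div_eq_mul_inv]
    exact (ih.mul (analyticAt_fst.sub (analyticAt_const.mul analyticAt_snd))).mul analyticAt_const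

lemma ch_analytic (k : ℕ) (q : ℂ × ℂ) : AnalyticAt ℂ (fun p : ℂ × ℂ => ch k p.1 p.2) q := by
  induction k with
  | zero => simp only [ch]; exact analyticAt_const
  | succ k ih =>
    simp only [ch, div_eq_mul_inv]
    exact ((ih.mul (analyticAt_fst.sub (analyticAt_const.mul analyticAt_snd))).add
      (analyticAt_snd.mul (bh_analytic k q))).mul analyticAt_const

lemma bc_hasDerivAt (k : ℕ) (t : ℂ) : HasDerivAt (bc k) (cc k t) t := by
  induction k with
  | zero =>
    have : bc 0 = fun _ => (1 : ℂ) := by funext t; rfl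
    rw [this, cc]
    exact hasDerivAt_const _ _
  | succ k ih =>
    have : bc (k + 1) = fun t => bc k t * (t - k) / (k + 1) := by funext t; rfl
    rw [this, cc]
    have := (ih.mul ((hasDerivAt_id t).sub_const (k : ℂ))).div_const ((k : ℂ) + 1)
    simpa using this

lemma bc_pascal (k : ℕ) (t : ℂ) : bc (k + 1) (t + 1) = bc (k + 1) t + bc k t := by
  induction k with
  | zero => simp [bc]
  | succ k ih =>
    have h1 : (k : ℂ) + 1 ≠ 0 := Nat.cast_add_one_ne_zero k
    have h2 : ((k + 1 : ℕ) : ℂ) + 1 ≠ 0 := Nat.cast_add_one_ne_zero (k + 1)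
    have e : bc (k + 1) t = bc k t * (t - k) / (k + 1) := rfl
    rw [show bc (k + 1 + 1) (t + 1) =
      bc (k + 1) (t + 1) * (t + 1 - (k + 1 : ℕ)) / ((k + 1 : ℕ) + 1) from rfl, ih,
      show bc (k + 1 + 1) t = bc (k + 1) t * (t - (k + 1 : ℕ)) / ((k + 1 : ℕ) + 1) from rfl, e]
    push_cast at h2 ⊢
    field_simp
    ring

lemma cc_pascal (k : ℕ) (t : ℂ) : cc (k + 1) (t + 1) = cc (k + 1) t + cc k t := by
  have h1 : HasDerivAt (fun t => bc (k + 1) (t + 1)) (cc (k + 1) (t + 1)) t :=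
    (bc_hasDerivAt (k + 1) (t + 1)).comp_add_const t 1
  have h2 := (bc_hasDerivAt (k + 1) t).add (bc_hasDerivAt k t)
  refine h1.unique (h2.congr_of_eventuallyEq ?_)
  filter_upwards with s
  exact bc_pascal k s

lemma bc_nat_zero (k j : ℕ) (h : j < k) : bc k j = 0 := by
  induction k with
  | zero => omega
  | succ k ih =>
    rw [bc]
    rcases Nat.lt_succ_iff_lt_or_eq.1 h with h | h
    · rw [ih h]; simp
    · rw [h]; simp

lemma cc_zero (k : ℕ) : cc (k + 1) 0 = (-1) ^ k / ((k : ℂ) + 1) := by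
  induction k with
  | zero => simp [cc, bc]
  | succ k ih =>
    have h1 : (k : ℂ) + 1 ≠ 0 := Nat.cast_add_one_ne_zero k
    have h0 : bc (k + 1) 0 = 0 := by simpa using bc_nat_zero (k + 1) 0 (by omega)
    rw [cc, ih, h0]
    push_cast
    field_simp
    ring

lemma norm_sub_nat (t : ℝ) (ht1 : t ≤ 1) (k : ℕ) :
    ‖(t : ℂ) - ((k + 1 : ℕ) : ℂ)‖ = k + 1 - t := by
  have : (t : ℂ) - ((k + 1 : ℕ) : ℂ) = ((t - (k + 1) : ℝ) : ℂ) := by push_cast; ring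
  rw [this, Complex.norm_real, Real.norm_eq_abs, abs_of_nonpos]
  · ring
  · have : (0 : ℝ) ≤ k := Nat.cast_nonneg k
    linarith

lemma norm_nat_add (k : ℕ) : ‖((k + 1 : ℕ) : ℂ) + 1‖ = (k : ℝ) + 1 + 1 := by
  have : ((k + 1 : ℕ) : ℂ) + 1 = ((k + 1 + 1 : ℕ) : ℂ) := by push_cast; ring
  rw [this, Complex.norm_natCast]; push_cast; ring

lemma bc_bound (t : ℝ) (ht0 : 0 ≤ t) (ht1 : t ≤ 1) (k : ℕ) :
    ‖bc (k + 1) t‖ ≤ t / ((k : ℝ) + 1) := by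
  induction k with
  | zero => simp [bc, abs_of_nonneg ht0]
  | succ k ih =>
    rw [bc, norm_div, norm_mul, norm_sub_nat t ht1, norm_nat_add]
    push_cast
    have hk : (0 : ℝ) ≤ k := Nat.cast_nonneg k
    apply div_le_div_of_nonneg_right _ (by positivity)
    calc _ ≤ t / ((k : ℝ) + 1) * ((k : ℝ) + 1) := by
          apply mul_le_mul ih (by linarith) (by linarith) (by positivity)
      _ = t := by field_simp

lemma cc_bound (t : ℝ) (ht0 : 0 ≤ t) (ht1 : t ≤ 1) (k : ℕ) :
    ‖cc (k + 1) t‖ ≤ 1 / ((k : ℝ) + 1) := by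
  induction k with
  | zero => simp [cc, bc]
  | succ k ih =>
    rw [cc, norm_div, norm_nat_add]
    push_cast
    have hk : (0 : ℝ) ≤ k := Nat.cast_nonneg k
    apply div_le_div_of_nonneg_right _ (by positivity)
    have h1 := norm_sub_nat t ht1 k
    push_cast at h1
    calc _ ≤ _ := norm_add_le _ _
      _ ≤ 1 / ((k : ℝ) + 1) * ((k : ℝ) + 1 - t) + t / ((k : ℝ) + 1) := by
          rw [norm_mul, h1]
          exact add_le_add (mul_le_mul_of_nonneg_right ih (by linarith)) (bc_bound t ht0 ht1 k)
      _ = 1 := by field_simp; ring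

section newton
variable {V : Type*} [NormedAddCommGroup V] [NormedSpace ℂ V]

/-- Newton interpolation polynomial. -/
noncomputable def newtN (g : V → V) (m : ℕ) (t : ℂ) (x : V) : V :=
  ∑ k ∈ Finset.range (m + 1), bc k t • finDiff g k x

/-- Its derivative in `t`. -/
noncomputable def newtW (g : V → V) (m : ℕ) (t : ℂ) (x : V) : V :=
  ∑ k ∈ Finset.range (m + 1), cc k t • finDiff g k x

lemma shift (g : V → V) (u w : ℕ → ℂ) (h0 : w 0 = u 0) (h1 : ∀ k, w (k + 1) = u (k + 1) + u k)
    (x : V) (m : ℕ) :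
    ∑ k ∈ Finset.range (m + 1), w k • finDiff g k x =
      ∑ k ∈ Finset.range (m + 1), u k • finDiff g k (g x) - u m • finDiff g (m + 1) x := by
  induction m with
  | zero => simp [h0, finDiff, smul_sub]
  | succ m ih =>
    rw [Finset.sum_range_succ, ih, Finset.sum_range_succ _ (m + 1), h1,
      show finDiff g (m + 1 + 1) x = finDiff g (m + 1) (g x) - finDiff g (m + 1) x from rfl,
      add_smul, smul_sub]
    abel

lemma newtN_succ (g : V → V) (m : ℕ) (t : ℂ) (x : V) :
    newtN g m (t + 1) x = newtN g m t (g x) - bc m t • finDiff g (m + 1) x :=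
  shift g (fun k => bc k t) (fun k => bc k (t + 1)) rfl (fun k => bc_pascal k t) x m

lemma newtW_succ (g : V → V) (m : ℕ) (t : ℂ) (x : V) :
    newtW g m (t + 1) x = newtW g m t (g x) - cc m t • finDiff g (m + 1) x :=
  shift g (fun k => cc k t) (fun k => cc k (t + 1)) rfl (fun k => cc_pascal k t) x m

lemma newtN_split (g : V → V) (m : ℕ) (t : ℂ) (x : V) :
    newtN g m t x = x + ∑ k ∈ Finset.range m, bc (k + 1) t • finDiff g (k + 1) x := by
  rw [newtN, Finset.sum_range_succ', add_comm]
  simp [bc, finDiff]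

lemma newtW_split (g : V → V) (m : ℕ) (t : ℂ) (x : V) :
    newtW g m t x = ∑ k ∈ Finset.range m, cc (k + 1) t • finDiff g (k + 1) x := by
  rw [newtW, Finset.sum_range_succ']
  simp [cc]

lemma newtN_nat (g : V → V) (m j : ℕ) (hj : j ≤ m) : ∀ x : V, newtN g m j x = g^[j] x := by
  induction j with
  | zero =>
    intro x
    rw [newtN_split, Finset.sum_eq_zero, add_zero]
    · rfl
    · intro k _
      rw [bc_nat_zero (k + 1) 0 (by omega), zero_smul]
  | succ j ih =>
    intro x
    push_cast
    rw [newtN_succ, bc_nat_zero m j (by omega), zero_smul, sub_zero, ih (by omega),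
      Function.iterate_succ_apply]

lemma newtW_zero (g : V → V) (m : ℕ) (x : V) :
    ∑ k ∈ Finset.Icc 1 m, ((-1 : ℂ) ^ (k - 1) / k) • finDiff g k x = newtW g m 0 x := by
  rw [newtW_split, sum_Icc_eq]
  refine Finset.sum_congr rfl fun k _ => ?_
  rw [cc_zero]
  simp

lemma newtW_bigO [CompleteSpace V] {f : V → V} {U : Set V} {ε : ℝ} (hε : 0 < ε) (hUo : IsOpen U)
    (hU : ∀ y ∈ U, ‖f y - y‖ ≤ ε) (hfa : AnalyticOnNhd ℂ f U) (m j : ℕ) :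
    ∀ y ∈ U, (fun p : ℂ × V => newtW (homF f p.1) m j p.2 -
      newtW (homF f p.1) m 0 ((homF f p.1)^[j] p.2)) =O[𝓝 ((0 : ℂ), y)]
      fun p => p.1 ^ (m + 1) := by
  induction j with
  | zero =>
    intro y hy
    simp only [Nat.cast_zero, Function.iterate_zero, id, sub_self]
    exact isBigO_zero _ _
  | succ j ih =>
    intro y hy
    push_cast
    simp only [newtW_succ, Function.iterate_succ_apply]
    have hc : Tendsto (fun p : ℂ × V => (p.1, homF f p.1 p.2)) (𝓝 ((0 : ℂ), y))
        (𝓝 ((0 : ℂ), y)) := by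
      have hfc : ContinuousAt (fun p : ℂ × V => f p.2) ((0 : ℂ), y) :=
        ContinuousAt.comp (f := fun p : ℂ × V => p.2) (hfa y hy).continuousAt continuousAt_snd
      have : ContinuousAt (fun p : ℂ × V => (p.1, homF f p.1 p.2)) ((0 : ℂ), y) := by
        unfold homF
        exact continuousAt_fst.prodMk
          (continuousAt_snd.add (continuousAt_fst.smul (hfc.sub continuousAt_snd)))
      have h2 := this.tendsto
      simpa [homF] using h2
    have h1 := (ih y hy).comp_tendsto hc
    have h2 := (finDiff_isBigO hε hUo hU hfa (m + 1) y hy).const_smul_left (cc m j)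
    refine (h1.sub h2).congr_left fun p => ?_
    simp only [Function.comp, Pi.smul_apply]
    abel

lemma newtW_analyticAt {f : V → V} {U : Set V} {ε : ℝ} (hε : 0 < ε)
    (hU : ∀ y ∈ U, ‖f y - y‖ ≤ ε) (hfa : AnalyticOnNhd ℂ f U) (m : ℕ) (t : ℂ)
    (y : V) (r : ℝ) (μ : ℂ) (hb : ball y r ⊆ U) (hr : 0 < r) (hm : m * ‖μ‖ * ε < r) :
    AnalyticAt ℂ (fun p : ℂ × V => newtW (homF f p.1) m t p.2) (μ, y) := by
  unfold newtW
  apply Finset.analyticAt_fun_sum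
  intro k hk
  have hk' : k ≤ m := Nat.lt_succ_iff.1 (Finset.mem_range.1 hk)
  refine analyticAt_const.smul (finDiff_analyticAt hε hU hfa k y r μ hb hr ?_)
  refine lt_of_le_of_lt ?_ hm
  gcongr

lemma newtN_analyticAt {f : V → V} {U : Set V} {ε : ℝ} (hε : 0 < ε)
    (hU : ∀ y ∈ U, ‖f y - y‖ ≤ ε) (hfa : AnalyticOnNhd ℂ f U) (m : ℕ) (t : ℂ)
    (y : V) (r : ℝ) (μ : ℂ) (hb : ball y r ⊆ U) (hr : 0 < r) (hm : m * ‖μ‖ * ε < r) :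
    AnalyticAt ℂ (fun p : ℂ × V => newtN (homF f p.1) m t p.2) (μ, y) := by
  unfold newtN
  apply Finset.analyticAt_fun_sum
  intro k hk
  have hk' : k ≤ m := Nat.lt_succ_iff.1 (Finset.mem_range.1 hk)
  refine analyticAt_const.smul (finDiff_analyticAt hε hU hfa k y r μ hb hr ?_)
  refine lt_of_le_of_lt ?_ hm
  gcongr

/-- The defect of the Newton interpolation as an approximate solution. -/
noncomputable def defect (f : V → V) (m : ℕ) (t : ℂ) (x : V) (μ : ℂ) : V :=
  newtW (homF f μ) m t x - newtW (homF f μ) m 0 (newtN (homF f μ) m t x)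

lemma defect_order [CompleteSpace V] {f : V → V} {U : Set V} {ε : ℝ} (hε : 0 < ε) (hUo : IsOpen U)
    (hU : ∀ y ∈ U, ‖f y - y‖ ≤ ε) (hfa : AnalyticOnNhd ℂ f U) (m : ℕ) (x : V) (hx : x ∈ U)
    (t : ℂ) : defect f m t x =O[𝓝 0] fun μ => μ ^ (m + 1) := by
  obtain ⟨r, hr, hb⟩ := Metric.isOpen_iff.1 hUo x hx
  have hfac : ∀ k, ∃ a : ℂ → V, AnalyticAt ℂ a 0 ∧
      ∀ᶠ μ in 𝓝 0, finDiff (homF f μ) k x = μ ^ k • a μ := fun k =>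
    exists_factor (slice (finDiff_analyticAt hε hU hfa k x r 0 hb hr (by simpa using hr))) k
      (slice_bigO (finDiff_isBigO hε hUo hU hfa k x hx))
  choose a ha hae using hfac
  let Y : ℂ × ℂ → V := fun p => ∑ k ∈ Finset.range (m + 1), bh k p.1 p.2 • a k p.2
  let Z : ℂ × ℂ → V := fun p => ∑ k ∈ Finset.range (m + 1), ch k p.1 p.2 • a k p.2
  let G : ℂ × ℂ → V := fun p => Z p - newtW (homF f p.2) m 0 (Y p)
  have hall : ∀ᶠ μ : ℂ in 𝓝 0, ∀ k ∈ Finset.range (m + 1),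
      finDiff (homF f μ) k x = μ ^ k • a k μ :=
    (Finset.eventually_all _).2 fun k _ => hae k
  have hYeq : ∀ t : ℂ, ∀ᶠ μ : ℂ in 𝓝 0, Y (t * μ, μ) = newtN (homF f μ) m t x := by
    intro t
    filter_upwards [hall] with μ hμ
    refine Finset.sum_congr rfl fun k hk => ?_
    rw [hμ k hk, bh_eq, smul_smul, mul_comm]
  have hZeq : ∀ t : ℂ, ∀ᶠ μ : ℂ in 𝓝 0, Z (t * μ, μ) = newtW (homF f μ) m t x := by
    intro t
    filter_upwards [hall] with μ hμ
    refine Finset.sum_congr rfl fun k hk => ?_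
    rw [hμ k hk, ch_eq, smul_smul, mul_comm]
  have hGeq : ∀ t : ℂ, ∀ᶠ μ : ℂ in 𝓝 0, G (t * μ, μ) = defect f m t x μ := by
    intro t
    filter_upwards [hYeq t, hZeq t] with μ h1 h2
    simp only [G, h1, h2, defect]
  have hY0 : Y (0, 0) = x := by
    have h1 := (hYeq 0).self_of_nhds
    rw [zero_mul] at h1
    rw [h1]
    simpa using newtN_nat (homF f 0) m 0 (Nat.zero_le m) x
  have hak : ∀ k, AnalyticAt ℂ (fun p : ℂ × ℂ => a k p.2) (0, 0) := fun k =>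
    AnalyticAt.fun_comp (g := a k) (f := fun p : ℂ × ℂ => p.2) (ha k) analyticAt_snd
  have hYa : AnalyticAt ℂ Y (0, 0) :=
    Finset.analyticAt_fun_sum _ fun k _ => (bh_analytic k _).smul (hak k)
  have hZa : AnalyticAt ℂ Z (0, 0) :=
    Finset.analyticAt_fun_sum _ fun k _ => (ch_analytic k _).smul (hak k)
  have hGa : AnalyticAt ℂ G (0, 0) := by
    apply hZa.sub
    have h1 := newtW_analyticAt hε hU hfa m 0 x r 0 hb hr (by simpa using hr)
    have h2 : AnalyticAt ℂ (fun p : ℂ × ℂ => (p.2, Y p)) (0, 0) := analyticAt_snd.prod hYa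
    refine AnalyticAt.fun_comp (f := fun p : ℂ × ℂ => (p.2, Y p))
      (g := fun p : ℂ × V => newtW (homF f p.1) m 0 p.2) ?_ h2
    rw [hY0]
    exact h1
  refine (homogeneous_order hGa m ?_ t).congr' (hGeq t) EventuallyEq.rfl
  intro j hj
  refine (slice_bigO (newtW_bigO hε hUo hU hfa m j x hx)).congr' ?_ EventuallyEq.rfl
  filter_upwards [hGeq j] with μ h1
  rw [h1, defect, newtN_nat _ m j hj]

end newton
end IVF
namespace IVF

section bounds
variable {V : Type*} [NormedAddCommGroup V] [NormedSpace ℂ V] [CompleteSpace V]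

lemma newt_bound {f : V → V} {U : Set V} {ε : ℝ} (hε : 0 < ε) (hUo : IsOpen U)
    (hU : ∀ y ∈ U, ‖f y - y‖ ≤ ε) (hfa : AnalyticOnNhd ℂ f U) (m : ℕ)
    (y : V) (r R : ℝ) (hb : ball y r ⊆ U) (hr : 0 < r) (hR : 0 < R) (hm : m * R * ε ≤ r)
    (μ : ℂ) (hμ : 4 * ‖μ‖ ≤ R) (t : ℝ) (ht0 : 0 ≤ t) (ht1 : t ≤ 1) :
    ‖newtW (homF f μ) m t y‖ ≤ 3 / 2 * (‖μ‖ * ε) ∧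
    ‖newtN (homF f μ) m t y - y‖ ≤ 3 / 2 * (‖μ‖ * ε) := by
  have hμR : ‖μ‖ < R := by
    have := norm_nonneg μ
    by_contra h
    push Not at h
    linarith
  have hv : ∀ k < m, ‖finDiff (homF f μ) (k + 1) y‖ ≤ ‖μ‖ * ε * (1 / 2) ^ k := by
    intro k hk
    have hk' : (k : ℝ) + 1 ≤ m := by exact_mod_cast hk
    refine (finDiff_schwarz hε hUo hU hfa k y r R hb hr hR ?_ μ hμR).trans ?_
    · refine le_trans ?_ hm
      gcongr
    · have : 2 * ‖μ‖ / R ≤ 1 / 2 := by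
        rw [div_le_iff₀ hR]; linarith
      gcongr
  constructor
  · rw [newtW_split]
    exact sum_bound m (fun k => cc k t) (fun k => finDiff (homF f μ) k y) _ (by positivity)
      (cc_bound t ht0 ht1) hv
  · rw [newtN_split, add_sub_cancel_left]
    refine sum_bound m (fun k => bc k t) (fun k => finDiff (homF f μ) k y) _ (by positivity)
      (fun k => (bc_bound t ht0 ht1 k).trans ?_) hv
    gcongr

lemma defect_bound {f : V → V} {U : Set V} {ε : ℝ} (hε : 0 < ε) (hUo : IsOpen U)
    (hU : ∀ y ∈ U, ‖f y - y‖ ≤ ε) (hfa : AnalyticOnNhd ℂ f U) (m : ℕ)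
    (x : V) (r ρ : ℝ) (hb : ball x r ⊆ U) (hρ : 1 < ρ)
    (hm : m * (4 * ρ) * ε + 2 * ρ * ε ≤ r) (t : ℝ) (ht0 : 0 ≤ t) (ht1 : t ≤ 1) :
    ‖defect f m t x 1‖ ≤ 3 * ρ * ε * (1 / ρ) ^ (m + 1) := by
  have hρ0 : 0 < ρ := by linarith
  have hρε : 0 < ρ * ε := by positivity
  have hm0 : 0 ≤ (m : ℝ) * (4 * ρ) * ε := by positivity
  have hr : 0 < r := by nlinarith
  have hmμ : ∀ μ : ℂ, ‖μ‖ < ρ → (m : ℝ) * ‖μ‖ * ε ≤ m * (4 * ρ) * ε := by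
    intro μ hμ
    have : ‖μ‖ ≤ 4 * ρ := by linarith
    gcongr
  have hN : ∀ μ : ℂ, ‖μ‖ < ρ → ball (newtN (homF f μ) m t x) (m * (4 * ρ) * ε + ρ * ε / 2) ⊆ U := by
    intro μ hμ
    refine Subset.trans (ball_subset_ball' ?_) hb
    have h1 := (newt_bound hε hUo hU hfa m x r (4 * ρ) hb hr (by positivity) (by linarith) μ
      (by linarith) t ht0 ht1).2
    rw [dist_eq_norm]
    have h2 : ‖μ‖ * ε ≤ ρ * ε := by gcongr
    linarith
  have key := schwarz_n (h := defect f m t x) (R := ρ) (M := 3 * ρ * ε) (n := m) ?_ ?_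
    (defect_order hε hUo hU hfa m x (hb (mem_ball_self hr)) t) (z := 1) (by simpa using hρ)
  · simpa using key
  · intro μ hμ
    have hμ' : ‖μ‖ < ρ := by simpa using hμ
    have h1 := hmμ μ hμ'
    have a1 := newtW_analyticAt hε hU hfa m t x r μ hb hr (by linarith)
    have a2 := newtN_analyticAt hε hU hfa m t x r μ hb hr (by linarith)
    have a3 := newtW_analyticAt hε hU hfa m 0 _ _ μ (hN μ hμ') (by linarith) (by linarith)
    have a4 : AnalyticAt ℂ (fun μ : ℂ => (μ, newtN (homF f μ) m t x)) μ :=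
      analyticAt_id.prod (slice a2)
    have a5 := AnalyticAt.fun_comp (f := fun μ : ℂ => (μ, newtN (homF f μ) m t x)) a3 a4
    exact ((slice a1).sub a5).differentiableAt.differentiableWithinAt
  · intro μ hμ
    have hμ' : ‖μ‖ < ρ := by simpa using hμ
    have b1 := (newt_bound hε hUo hU hfa m x r (4 * ρ) hb hr (by positivity) (by linarith) μ
      (by linarith) t ht0 ht1).1
    have b2 := (newt_bound hε hUo hU hfa m _ _ (4 * ρ) (hN μ hμ') (by linarith) (by positivity)
      (by linarith) μ (by linarith) 0 le_rfl zero_le_one).1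
    rw [Complex.ofReal_zero] at b2
    have h2 : ‖μ‖ * ε ≤ ρ * ε := by gcongr
    unfold defect
    refine (norm_sub_le _ _).trans ?_
    linarith

end bounds

lemma picard_mem {E : Type*} [NormedAddCommGroup E] [NormedSpace ℝ E] [CompleteSpace E]
    {f : ℝ → E → E} {tmin tmax : ℝ} {t₀ : Icc tmin tmax} {x : E} {a L K : NNReal}
    (hf : IsPicardLindelof f t₀ x a 0 L K) :
    ∃ α : ℝ → E, α t₀ = x ∧ ∀ t ∈ Icc tmin tmax, α t ∈ closedBall x a ∧
      HasDerivWithinAt α (f t (α t)) (Icc tmin tmax) t := by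
  have hx : x ∈ closedBall x (0 : NNReal) := mem_closedBall_self le_rfl
  obtain ⟨α, hα⟩ := ODE.FunSpace.exists_isFixedPt_next hf hx
  refine ⟨α.compProj, by rw [ODE.FunSpace.compProj_val, ← hα, ODE.FunSpace.next_apply₀],
    fun t ht ↦ ⟨α.compProj_mem_closedBall hf.mul_max_le, ?_⟩⟩
  apply ODE.hasDerivWithinAt_picard_Icc t₀.2 hf.continuousOn_uncurry
    α.continuous_compProj.continuousOn (fun _ ht' ↦ α.compProj_mem_closedBall hf.mul_max_le)
    x ht |>.congr_of_mem _ ht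
  intro t' ht'
  nth_rw 1 [← hα]
  rw [ODE.FunSpace.compProj_of_mem ht', ODE.FunSpace.next_apply]

lemma exp_two_ninths : Real.exp (2 / 9) ≤ 5 / 4 := by
  have h1 : Real.exp (2 / 9) ^ 9 ≤ (5 / 4) ^ 9 := by
    rw [← Real.exp_nat_mul]
    have : ((9 : ℕ) : ℝ) * (2 / 9) = 1 + 1 := by norm_num
    rw [this, Real.exp_add]
    have h := Real.exp_one_lt_d9
    have h0 := Real.exp_pos 1
    calc Real.exp 1 * Real.exp 1 ≤ 2.7182818286 * 2.7182818286 := by gcongr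
      _ ≤ _ := by norm_num
  exact le_of_pow_le_pow_left₀ (by norm_num) (by norm_num) h1

lemma flow_exists {d : ℕ} {X : CPhase d → CPhase d} {x : CPhase d} {ε : ℝ} (hε : 0 < ε)
    (hd : DifferentiableOn ℂ X (ball x (16 * ε)))
    (hX : ∀ y ∈ ball x (16 * ε), ‖X y‖ ≤ 3 / 2 * ε) :
    LipschitzOnWith (2 / 9) X (closedBall x (9 / 4 * ε)) ∧
    ∃ γ : ℝ → CPhase d, γ 0 = x ∧ ∀ t ∈ Icc (0 : ℝ) 1,
      γ t ∈ closedBall x (9 / 4 * ε) ∧ HasDerivAt γ (X (γ t)) t := by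
  have hsub : ∀ y ∈ closedBall x (9 / 4 * ε), ball y (27 / 2 * ε) ⊆ ball x (16 * ε) := by
    intro y hy
    apply ball_subset_ball'
    rw [mem_closedBall] at hy
    linarith
  have hlip : LipschitzOnWith (2 / 9) X (closedBall x (9 / 4 * ε)) := by
    apply Convex.lipschitzOnWith_of_nnnorm_fderiv_le (𝕜 := ℂ) _ _ (convex_closedBall _ _)
    · intro y hy
      exact (hd.differentiableAt (isOpen_ball.mem_nhds
        (hsub y hy (mem_ball_self (by positivity)))))
    · intro y hy
      have hy2 := hsub y hy
      have := Complex.norm_fderiv_le_div_of_mapsTo_ball (R₂ := 3 * ε) (hd.mono hy2)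
        (fun w hw => by
          rw [mem_closedBall, dist_eq_norm]
          have h1 := hX w (hy2 hw)
          have h2 := hX y (hy2 (mem_ball_self (by positivity)))
          exact (norm_sub_le _ _).trans (by linarith)) (by positivity)
      rw [← NNReal.coe_le_coe, coe_nnnorm]
      refine this.trans (le_of_eq ?_)
      push_cast
      field_simp
      norm_num
  refine ⟨hlip, ?_⟩
  let a : NNReal := ⟨9 / 4 * ε, by positivity⟩
  let L : NNReal := ⟨3 / 2 * ε, by positivity⟩
  have hPL : IsPicardLindelof (fun _ => X) (tmin := -(1 / 2)) (tmax := 3 / 2)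
      ⟨0, by constructor <;> norm_num⟩ x a 0 L (2 / 9) := by
    apply IsPicardLindelof.of_time_independent
    · intro y hy
      exact hX y (hsub y hy (mem_ball_self (by positivity)))
    · exact hlip
    · have h1 : max ((3 : ℝ) / 2 - 0) (0 - -(1 / 2)) = 3 / 2 := by norm_num
      change (3 / 2 * ε) * max ((3 : ℝ) / 2 - 0) (0 - -(1 / 2)) ≤ 9 / 4 * ε - 0
      rw [h1]
      linarith
  obtain ⟨γ, h0, hγ⟩ := picard_mem hPL
  refine ⟨γ, h0, fun t ht => ?_⟩
  obtain ⟨h1, h2⟩ := hγ t ⟨by linarith [ht.1], by linarith [ht.2]⟩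
  exact ⟨h1, h2.hasDerivAt (Icc_mem_nhds (by linarith [ht.1]) (by linarith [ht.2]))⟩

lemma newtN_hasDerivAt {d : ℕ} (g : CPhase d → CPhase d) (m : ℕ) (x : CPhase d) (t : ℝ) :
    HasDerivAt (fun t : ℝ => newtN g m (t : ℂ) x) (newtW g m t x) t := by
  have h1 : HasDerivAt (fun t : ℂ => newtN g m t x) (newtW g m t x) (t : ℂ) := by
    unfold newtN newtW
    exact HasDerivAt.fun_sum fun k _ => (bc_hasDerivAt k _).smul_const _
  have h2 := HasDerivAt.scomp t h1 (Complex.ofRealCLM.hasDerivAt (x := t))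
  simpa [Function.comp_def] using h2

end IVF
namespace IVF

lemma ball_sub {V : Type*} [NormedAddCommGroup V] {D₀ : Set V} {δ : ℝ} (hδ : 0 < δ) {x : V}
    (hx : x ∈ cthickening (δ / 2) D₀) : ball x (δ / 4) ⊆ thickening (3 * δ / 4) D₀ := by
  intro y hy
  rw [mem_cthickening_iff] at hx
  rw [mem_thickening_iff_infEDist_lt]
  have h1 : edist y x < ENNReal.ofReal (δ / 4) := by
    rw [edist_dist]
    exact (ENNReal.ofReal_lt_ofReal_iff (by positivity)).2 hy
  calc infEDist y D₀ ≤ infEDist x D₀ + edist y x := infEDist_le_infEDist_add_edist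
    _ < ENNReal.ofReal (δ / 2) + ENNReal.ofReal (δ / 4) :=
        ENNReal.add_lt_add_of_le_of_lt (ne_top_of_le_ne_top ENNReal.ofReal_ne_top hx) hx h1
    _ = ENNReal.ofReal (3 * δ / 4) := by
        rw [← ENNReal.ofReal_add (by positivity) (by positivity)]; congr 1; ring

lemma gron {d : ℕ} {X : CPhase d → CPhase d} {s : Set (CPhase d)} {γ g g' : ℝ → CPhase d} {c : ℝ}
    (hc : 0 ≤ c)
    (hL : LipschitzOnWith (2 / 9) X s)
    (hγ : ∀ t ∈ Icc (0 : ℝ) 1, γ t ∈ s ∧ HasDerivAt γ (X (γ t)) t)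
    (hg : ∀ t ∈ Icc (0 : ℝ) 1, g t ∈ s ∧ HasDerivAt g (g' t) t ∧ ‖g' t - X (g t)‖ ≤ c)
    (h0 : γ 0 = g 0) : ‖γ 1 - g 1‖ ≤ 9 / 8 * c := by
  have h := dist_le_of_approx_trajectories_ODE_of_mem (v := fun _ => X) (s := fun _ => s)
    (K := 2 / 9) (f := γ) (f' := fun t => X (γ t)) (g := g) (g' := g') (a := 0) (b := 1)
    (εf := 0) (εg := c) (δ := 0)
    (fun _ _ => hL) (fun t ht => (hγ t ht).2.continuousAt.continuousWithinAt)
    (fun t ht => (hγ t (Ico_subset_Icc_self ht)).2.hasDerivWithinAt)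
    (fun t ht => by simp) (fun t ht => (hγ t (Ico_subset_Icc_self ht)).1)
    (fun t ht => (hg t ht).2.1.continuousAt.continuousWithinAt)
    (fun t ht => (hg t (Ico_subset_Icc_self ht)).2.1.hasDerivWithinAt)
    (fun t ht => by rw [dist_eq_norm]; exact (hg t (Ico_subset_Icc_self ht)).2.2)
    (fun t ht => (hg t (Ico_subset_Icc_self ht)).1) (by rw [h0, dist_self])
    1 (by simp)
  rw [dist_eq_norm, gronwallBound_of_K_ne_0 (by norm_num)] at h
  refine h.trans ?_
  have he := exp_two_ninths
  have : (((2 / 9 : NNReal) : ℝ)) = 2 / 9 := by norm_num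
  simp only [this, zero_mul, zero_add, sub_zero, mul_one]
  nlinarith

lemma main {d : ℕ} (D₀ : Set (CPhase d)) (δ ε : ℝ) (hδ : 0 < δ) (hε : 0 < ε)
    (f : CPhase d → CPhase d)
    (hfa : AnalyticOnNhd ℂ f (thickening (3 * δ / 4) D₀))
    (hU : ∀ y ∈ thickening (3 * δ / 4) D₀, ‖f y - y‖ ≤ ε)
    (m : ℕ) (hm : 1 ≤ m) (L : ℝ) (hδL : δ = 6 * Real.exp 1 * ε * L) (hL1 : m + 1 ≤ L) :
    (∀ x ∈ cthickening (δ / 2) D₀, ∀ k ≤ m, f^[k] x ∈ cthickening δ D₀) ∧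
    AnalyticOnNhd ℂ (interpVF d f m) (cthickening (δ / 2) D₀) ∧
    (∀ x ∈ cthickening (δ / 2) D₀, ‖interpVF d f m x‖ ≤ 3 / 2 * ε) ∧
    ∀ x ∈ D₀, ∃ γ : ℝ → CPhase d, γ 0 = x ∧
        (∀ t ∈ Set.Icc (0 : ℝ) 1, γ t ∈ cthickening (δ / 2) D₀ ∧
          HasDerivAt γ (interpVF d f m (γ t)) t) ∧
        ‖γ 1 - f x‖ ≤ 3 * ε * Real.exp (-m) := by
  have he : (2.7 : ℝ) < Real.exp 1 := by have := Real.exp_one_gt_d9; linarith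
  have hm1 : (1 : ℝ) ≤ m := by exact_mod_cast hm
  have hUo : IsOpen (thickening (3 * δ / 4) D₀) := isOpen_thickening
  have hX : interpVF d f m = newtW f m 0 := by
    funext x; exact newtW_zero f m x
  have hδm : (27 / 10) * 6 * ε * (m + 1) ≤ δ := by
    rw [hδL]
    have h1 : (27 / 10) * 6 * ε ≤ 6 * Real.exp 1 * ε := by nlinarith
    exact mul_le_mul h1 hL1 (by positivity) (by positivity)
  have hmε : 0 < m * ε := by positivity
  have h4 : (m : ℝ) * 4 * ε ≤ δ / 4 := by nlinarith
  have hAn : AnalyticOnNhd ℂ (interpVF d f m) (cthickening (δ / 2) D₀) := by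
    intro x hx
    have h := newtW_analyticAt hε hU hfa m 0 x (δ / 4) 1 (ball_sub hδ hx) (by positivity)
      (by simp; nlinarith)
    have h2 : AnalyticAt ℂ (fun y : CPhase d => ((1 : ℂ), y)) x :=
      analyticAt_const.prod analyticAt_id
    have h3 := AnalyticAt.fun_comp (f := fun y : CPhase d => ((1 : ℂ), y)) (x := x) h h2
    simp only [homF_one] at h3
    rw [hX]
    exact h3
  have hBd : ∀ x ∈ cthickening (δ / 2) D₀, ‖interpVF d f m x‖ ≤ 3 / 2 * ε := by
    intro x hx
    have h := (newt_bound hε hUo hU hfa m x (δ / 4) 4 (ball_sub hδ hx) (by positivity)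
      (by norm_num) h4 1 (by simp) 0 le_rfl zero_le_one).1
    rw [homF_one] at h
    rw [hX]
    simpa using h
  refine ⟨?_, hAn, hBd, ?_⟩
  · intro x hx k hk
    have hk' : (k : ℝ) * ε ≤ m * ε := by gcongr
    have hlt : (k : ℝ) * ε < δ / 4 := by nlinarith
    have h := iterate_mem hε hU x (δ / 4) (ball_sub hδ hx) k hlt
    have h2 := ball_sub hδ hx (mem_ball.2 (h.trans_lt hlt))
    exact thickening_subset_cthickening_of_le (by linarith) D₀ h2
  · intro x hx
    have hcb : closedBall x (δ / 2) ⊆ cthickening (δ / 2) D₀ := closedBall_subset_cthickening hx _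
    have h16 : ball x (16 * ε) ⊆ cthickening (δ / 2) D₀ :=
      (ball_subset_closedBall.trans (closedBall_subset_closedBall (by nlinarith))).trans hcb
    obtain ⟨hLip, γ, hγ0, hγ⟩ := flow_exists hε
      (fun y hy => (hAn y (h16 hy)).differentiableAt.differentiableWithinAt)
      (fun y hy => hBd y (h16 hy))
    have hs : closedBall x (9 / 4 * ε) ⊆ cthickening (δ / 2) D₀ :=
      (closedBall_subset_closedBall (by nlinarith)).trans hcb
    refine ⟨γ, hγ0, fun t ht => ⟨hs (hγ t ht).1, (hγ t ht).2⟩, ?_⟩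
    set ρ : ℝ := 9 * Real.exp 1 / 8 with hρ
    have hρ1 : 1 < ρ := by rw [hρ]; linarith
    have hρ0 : 0 < ρ := by linarith
    have hbU : ball x (3 * δ / 4) ⊆ thickening (3 * δ / 4) D₀ := ball_subset_thickening hx _
    have hbU' : ball x (δ / 4) ⊆ thickening (3 * δ / 4) D₀ :=
      (ball_subset_ball (by linarith)).trans hbU
    have hmr : (m : ℝ) * (4 * ρ) * ε + 2 * ρ * ε ≤ 3 * δ / 4 := by
      have h1 : 0 < ρ * ε := by positivity
      have h2 : 3 * δ / 4 = 4 * (ρ * ε) * L := by rw [hδL, hρ]; ring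
      have h3 : 4 * (ρ * ε) * (m + 1) ≤ 4 * (ρ * ε) * L := by gcongr
      rw [h2]; nlinarith
    have hG := gron (X := interpVF d f m) (s := closedBall x (9 / 4 * ε)) (γ := γ)
      (g := fun t : ℝ => newtN f m (t : ℂ) x) (g' := fun t : ℝ => newtW f m (t : ℂ) x)
      (c := 3 * ρ * ε * (1 / ρ) ^ (m + 1)) (by positivity) hLip hγ
      (fun t ht => ⟨?_, newtN_hasDerivAt f m x t, ?_⟩) ?_
    · have h1 : newtN f m ((1 : ℝ) : ℂ) x = f x := by
        have := newtN_nat f m 1 hm x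
        simpa using this
      simp only [h1] at hG
      refine hG.trans ?_
      have h2 : 3 * ρ * ε * (1 / ρ) ^ (m + 1) = 3 * ε * (1 / ρ) ^ m := by
        rw [pow_succ]; field_simp
      have h3 : (1 / ρ) ^ m ≤ 8 / 9 * Real.exp (-m) := by
        have h5 : 1 / ρ = 8 / 9 * Real.exp (-1) := by
          rw [hρ, Real.exp_neg]; field_simp
        rw [h5, mul_pow, ← Real.exp_nat_mul]
        have h6 : ((8 : ℝ) / 9) ^ m ≤ 8 / 9 := by
          calc ((8 : ℝ) / 9) ^ m ≤ (8 / 9) ^ 1 :=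
                pow_le_pow_of_le_one (by norm_num) (by norm_num) hm
            _ = 8 / 9 := pow_one _
        have h7 : (m : ℝ) * (-1) = -m := by ring
        rw [h7]
        gcongr
      rw [h2]
      have := mul_le_mul_of_nonneg_left h3 hε.le
      nlinarith
    · have h := (newt_bound hε hUo hU hfa m x (δ / 4) 4 hbU' (by positivity)
        (by norm_num) h4 1 (by simp) t ht.1 ht.2).2
      rw [homF_one] at h
      rw [mem_closedBall, dist_eq_norm]
      simp only [norm_one, one_mul] at h
      linarith
    · have h := defect_bound hε hUo hU hfa m x (3 * δ / 4) ρ hbU hρ1 hmr t ht.1 ht.2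
      unfold defect at h
      rw [homF_one] at h
      rw [hX]
      exact h
    · have := newtN_nat f m 0 (Nat.zero_le _) x
      simp only [hγ0]
      simpa using this.symm

end IVF

/-- **Embedding theorem, interpolating vector field part.**
`D₀ ⊂ ℂ^{2d}`, `D` its `δ`-neighbourhood, `D₁` its `δ/2`-neighbourhood; `S` analytic on
`D` with `|∇S| ≤ ε` there, and `f` the symplectic map generated by `P·q + S(P,q)`.
If `m = ⌊δ/(6eε) − d⌋ ≥ 1`, then every point of `D₁` has `m` forward iterates under `f`
lying in `D`, the interpolating vector field `X_m` is analytic on `D₁` with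
`‖X_m‖_{D₁} ≤ 2ε`, and its time-one flow map `Φ_{X_m}` satisfies
`‖Φ_{X_m} − f‖_{D₀} ≤ 3 e^{d+1} ε exp(−δ/(6eε))`. -/
theorem embedding_interpolating_vector_field (d : ℕ) (hd : 1 ≤ d)
    (D₀ : Set (CPhase d)) (δ ε : ℝ) (hδ : 0 < δ) (hε : 0 < ε)
    (D D₁ : Set (CPhase d))
    (hD : D = Metric.cthickening δ D₀)
    (hD₁ : D₁ = Metric.cthickening (δ / 2) D₀)
    (S : CPhase d → ℂ) (hS : AnalyticOnNhd ℂ S D)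
    (hεub : ∀ x ∈ D, max ‖pGrad d S x‖ ‖qGrad d S x‖ ≤ ε)
    (f : CPhase d → CPhase d)
    (hfa : AnalyticOnNhd ℂ f (Metric.thickening (3 * δ / 4) D₀))
    (hf : ∀ x ∈ Metric.thickening (3 * δ / 4) D₀,
      ((f x).1, x.2) ∈ D ∧
      x.1 = (f x).1 + qGrad d S ((f x).1, x.2) ∧
      (f x).2 = x.2 + pGrad d S ((f x).1, x.2))
    (m : ℕ) (hm : 1 ≤ m)
    (hmdef : (m : ℤ) = ⌊δ / (6 * Real.exp 1 * ε) - d⌋) :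
    (∀ x ∈ D₁, ∀ k ≤ m, f^[k] x ∈ D) ∧
    AnalyticOnNhd ℂ (interpVF d f m) D₁ ∧
    (∀ x ∈ D₁, ‖interpVF d f m x‖ ≤ 2 * ε) ∧
    ∃ Φ : CPhase d → CPhase d,
      (∀ x ∈ D₀, ∃ γ : ℝ → CPhase d, γ 0 = x ∧ γ 1 = Φ x ∧
        ∀ t ∈ Set.Icc (0 : ℝ) 1, γ t ∈ D₁ ∧ HasDerivAt γ (interpVF d f m (γ t)) t) ∧
      ∀ x ∈ D₀, ‖Φ x - f x‖ ≤
        3 * Real.exp ((d : ℝ) + 1) * ε * Real.exp (-δ / (6 * Real.exp 1 * ε)) := by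
  have hpos : 0 < 6 * Real.exp 1 * ε := by positivity
  have hd1 : (1 : ℝ) ≤ d := by exact_mod_cast hd
  obtain ⟨hfl1, hfl2⟩ := Int.floor_eq_iff.1 hmdef.symm
  push_cast at hfl1 hfl2
  have hU : ∀ y ∈ Metric.thickening (3 * δ / 4) D₀, ‖f y - y‖ ≤ ε := by
    intro y hy
    obtain ⟨h1, h2, h3⟩ := hf y hy
    have h4 := hεub _ h1
    have e1 : (f y - y).1 = -qGrad d S ((f y).1, y.2) := by
      rw [Prod.fst_sub, sub_eq_iff_eq_add]
      rw [eq_comm, neg_add_eq_iff_eq_add, add_comm]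
      exact h2
    have e2 : (f y - y).2 = pGrad d S ((f y).1, y.2) := by
      rw [Prod.snd_sub, h3, add_sub_cancel_left]
    rw [Prod.norm_def, e1, e2, norm_neg, max_comm]
    exact h4
  obtain ⟨h1, h2, h3, h4⟩ := IVF.main D₀ δ ε hδ hε f hfa hU m hm (δ / (6 * Real.exp 1 * ε))
    (by field_simp) (by linarith)
  subst hD hD₁
  refine ⟨h1, h2, fun x hx => (h3 x hx).trans (by linarith), ?_⟩
  classical
  choose! γ hγ0 hγ hγe using h4
  refine ⟨fun x => γ x 1, fun x hx => ⟨γ x, hγ0 x hx, rfl, hγ x hx⟩, fun x hx => ?_⟩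
  refine (hγe x hx).trans ?_
  have e1 : Real.exp (-(m : ℝ)) ≤
      Real.exp ((d : ℝ) + 1) * Real.exp (-δ / (6 * Real.exp 1 * ε)) := by
    rw [← Real.exp_add, Real.exp_le_exp, neg_div]
    linarith
  have := mul_le_mul_of_nonneg_left e1 (by positivity : 0 ≤ 3 * ε)
  linarith
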